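/- arXiv:math/0303024 — 2 statements merged into one kernel-verified Lean document; each statement's English description precedes it below -/
import Mathlib

section
/- For every smooth compactly supported function f : ℝ^m → ℂ and every ε > 0 there exists a smooth compactly supported function F : ℂ^m → ℂ such that F restricted to ℝ^m equals f, the support of F is contained in the ε-neighborhood of supp f (with ℝ^m regarded as the subset of ℂ^m of points with all imaginary parts zero), and for every j ∈ {1,…,m} and every N ∈ ℕ there is a constant C_N with |∂F/∂z̄_j(z)| ≤ C_N |Im z_j|^N for all z ∈ ℂ^m. -/
open MeasureTheory Complex

noncomputable section

/-- The Cauchy–Riemann operator in the `j`-th variable: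
`∂F/∂z̄_j = (∂F/∂x_j + i ∂F/∂y_j)/2`. -/
def dbarj {m : ℕ} (F : (Fin m → ℂ) → ℂ) (j : Fin m) (z : Fin m → ℂ) : ℂ :=
  (fderiv ℝ F z (Pi.single j 1) + Complex.I * fderiv ℝ F z (Pi.single j Complex.I)) / 2

/-- The embedding of `ℝ^m` into `ℂ^m`. -/
def embR {m : ℕ} (x : Fin m → ℝ) : Fin m → ℂ := fun j => (x j : ℂ)

/-!
Suppose `K : ℝ → ℂ` has moments `∫ tⁿ K(t) dt = iⁿ`, so that integration against `K` acts on Taylor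
expansions like evaluation at `t = i`. Such a `K` is the inverse Fourier transform of `e^{2πξ}`, cut
off away from the origin. The formal extension `f(x + iy)` of a function `f` of one real variable
is then realised by `F(x + iy) = ∫ K(t) f(x + ty) φ(ty) dt`, where the cutoff `φ` controls the
support. Up to terms containing `φ'`, which vanish for small `y`, `2 ∂F/∂z̄` is the same integral of
`f'` against `(1 + it) K(t)`. All moments of this kernel vanish, so `∂F/∂z̄` is flat at `y = 0` by
Taylor's formula. In several variables one starts from `f(Re z) ∏ φ(Im z_k)`, whose `∂/∂y_k` is flat
in `y_k`, and extends in one variable after the other; each step commutes with the derivatives in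
the remaining variables and preserves their flatness.
-/

open Filter Topology Set
open scoped ContDiff FourierTransform SchwartzMap

section TestFunctions

variable {E F : Type*} [NormedAddCommGroup E] [NormedSpace ℝ E]
  [NormedAddCommGroup F] [NormedSpace ℝ F] {f : E → F}

/-- Smooth functions with compact support, the `C_0^∞` of the text. -/
structure IsTestFunction (f : E → F) : Prop where
  contDiff : ContDiff ℝ ∞ f
  hasCompactSupport : HasCompactSupport f

namespace IsTestFunction

theorem continuous (hf : IsTestFunction f) : Continuous f :=
  hf.contDiff.continuous

theorem differentiable (hf : IsTestFunction f) : Differentiable ℝ f :=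
  hf.contDiff.differentiable (by simp)

theorem exists_norm_le (hf : IsTestFunction f) : ∃ C, ∀ x, ‖f x‖ ≤ C :=
  hf.hasCompactSupport.exists_bound_of_continuous hf.continuous

theorem fderiv_apply (hf : IsTestFunction f) (v : E) : IsTestFunction (fderiv ℝ f · v) where
  contDiff := (hf.contDiff.fderiv_right (m := ∞) (by simp)).clm_apply contDiff_const
  hasCompactSupport := hf.hasCompactSupport.fderiv_apply ℝ v

theorem const_mul {f : E → ℂ} (hf : IsTestFunction f) (c : ℂ) :
    IsTestFunction fun x ↦ c * f x where
  contDiff := contDiff_const.mul hf.contDiff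
  hasCompactSupport := hf.hasCompactSupport.mul_left

theorem exists_norm_fderiv_le (hf : IsTestFunction f) : ∃ C, ∀ x, ‖fderiv ℝ f x‖ ≤ C :=
  (hf.hasCompactSupport.fderiv ℝ).exists_bound_of_continuous
    (hf.contDiff.continuous_fderiv (by simp))

theorem exists_norm_iteratedFDeriv_le (hf : IsTestFunction f) (n : ℕ) :
    ∃ C, ∀ x, ‖iteratedFDeriv ℝ n f x‖ ≤ C :=
  (hf.hasCompactSupport.iteratedFDeriv n).exists_bound_of_continuous
    (hf.contDiff.continuous_iteratedFDeriv (by exact_mod_cast le_top))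

end IsTestFunction

end TestFunctions

theorem norm_sub_sum_iteratedFDeriv_le {E F : Type*} [NormedAddCommGroup E] [NormedSpace ℝ E]
    [NormedAddCommGroup F] [NormedSpace ℝ F] [CompleteSpace F] {f : E → F} {N : ℕ}
    (hf : ContDiff ℝ N f) {C : ℝ} (hC : ∀ x, ‖iteratedFDeriv ℝ N f x‖ ≤ C) (x y : E) :
    ‖f (x + y) - ∑ k ∈ Finset.range N,
      (k.factorial : ℝ)⁻¹ • iteratedFDeriv ℝ k f x (fun _ ↦ y)‖ ≤ C * ‖y‖ ^ N := by
  cases N with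
  | zero => simpa using hC (x + y)
  | succ n =>
    have remainder_le : ∀ t ∈ Set.uIoc (0 : ℝ) 1,
        ‖(1 - t) ^ n • iteratedFDeriv ℝ (n + 1) f (x + t • y) (fun _ ↦ y)‖
          ≤ C * ‖y‖ ^ (n + 1) := by
      intro t ht
      rw [uIoc_of_le zero_le_one] at ht
      have weight_le : ‖(1 - t) ^ n‖ ≤ 1 := by
        rw [norm_pow]
        exact pow_le_one₀ (norm_nonneg _) (abs_le.2 ⟨by linarith [ht.2], by linarith [ht.1]⟩)
      have deriv_le : ‖iteratedFDeriv ℝ (n + 1) f (x + t • y) (fun _ ↦ y)‖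
          ≤ C * ‖y‖ ^ (n + 1) := by
        simpa using ContinuousMultilinearMap.le_of_opNorm_le (hC (x + t • y)) (fun _ ↦ y)
      rw [norm_smul]
      exact (mul_le_of_le_one_left (norm_nonneg _) weight_le).trans deriv_le
    rw [map_add_eq_sum_add_integral_iteratedFDeriv (f := f) (x := x) (y := y) (n := n)
      fun t _ ↦ by exact_mod_cast hf.contDiffAt, add_sub_cancel_left, norm_smul]
    have factorial_le : ‖(n.factorial : ℝ)⁻¹‖ ≤ 1 := by
      rw [norm_inv, Real.norm_natCast]
      exact inv_le_one_of_one_le₀ (by exact_mod_cast n.factorial_pos)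
    refine (mul_le_of_le_one_left (norm_nonneg _) factorial_le).trans ?_
    simpa using intervalIntegral.norm_integral_le_of_norm_le_const remainder_le

section Flatness

variable {X : Type*} {ρ : X → ℝ} {H H₁ H₂ : X → ℂ}

/-- `H` vanishes to infinite order on `{ρ = 0}`, with constants uniform over the whole space. -/
def FlatAlong (ρ : X → ℝ) (H : X → ℂ) : Prop :=
  ∀ N : ℕ, ∃ C : ℝ, ∀ z, ‖H z‖ ≤ C * |ρ z| ^ N

theorem FlatAlong.add (h₁ : FlatAlong ρ H₁) (h₂ : FlatAlong ρ H₂) :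
    FlatAlong ρ fun z ↦ H₁ z + H₂ z := by
  intro N
  obtain ⟨C₁, hC₁⟩ := h₁ N
  obtain ⟨C₂, hC₂⟩ := h₂ N
  refine ⟨C₁ + C₂, fun z ↦ ?_⟩
  rw [add_mul]
  exact norm_add_le_of_le (hC₁ z) (hC₂ z)

theorem FlatAlong.const_mul (h : FlatAlong ρ H) (c : ℂ) : FlatAlong ρ fun z ↦ c * H z := by
  intro N
  obtain ⟨C, hC⟩ := h N
  refine ⟨‖c‖ * C, fun z ↦ ?_⟩
  rw [norm_mul, mul_assoc]
  exact mul_le_mul_of_nonneg_left (hC z) (norm_nonneg c)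

theorem flatAlong_of_eventually_eq_zero {C : ℝ} (hC : ∀ z, ‖H z‖ ≤ C)
    (hH : ∀ᶠ z in comap ρ (𝓝 0), H z = 0) : FlatAlong ρ H := by
  obtain ⟨r, hr, hH⟩ := Metric.eventually_nhds_iff.1 (eventually_comap.1 hH)
  refine fun N ↦ ⟨C / r ^ N, fun z ↦ ?_⟩
  have hC₀ : 0 ≤ C := (norm_nonneg _).trans (hC z)
  rcases lt_or_ge |ρ z| r with hz | hz
  · rw [hH (by simpa using hz) z rfl, norm_zero]
    positivity
  · calc ‖H z‖ ≤ C := hC z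
      _ = C / r ^ N * r ^ N := by field_simp
      _ ≤ C / r ^ N * |ρ z| ^ N := by gcongr

end Flatness

section Moments

/-- All moments `∫ tⁿ K(t) dt` converge absolutely. -/
def HasFiniteMoments (K : ℝ → ℂ) : Prop :=
  ∀ n : ℕ, Integrable fun t : ℝ ↦ (t : ℂ) ^ n * K t

namespace HasFiniteMoments

variable {K : ℝ → ℂ}

theorem integrable (hK : HasFiniteMoments K) : Integrable K := by
  simpa using hK 0

theorem ofReal_mul (hK : HasFiniteMoments K) : HasFiniteMoments fun t ↦ (t : ℂ) * K t := by
  intro n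
  simpa only [pow_succ, mul_assoc] using hK (n + 1)

theorem add_const_mul {K' : ℝ → ℂ} (hK : HasFiniteMoments K) (hK' : HasFiniteMoments K') (c : ℂ) :
    HasFiniteMoments fun t ↦ K t + c * K' t := by
  intro n
  exact ((hK n).add ((hK' n).const_mul c)).congr
    (.of_forall fun t ↦ by simp only [Pi.add_apply]; ring)

theorem integrable_abs_pow_mul_norm (hK : HasFiniteMoments K) (n : ℕ) :
    Integrable fun t : ℝ ↦ |t| ^ n * ‖K t‖ := by
  simpa using (hK n).norm

theorem norm_integral_mul_le (hK : HasFiniteMoments K) {g : ℝ → ℂ} {n : ℕ} {b : ℝ}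
    (hg : ∀ t, ‖g t‖ ≤ b * |t| ^ n) : ‖∫ t, K t * g t‖ ≤ b * ∫ t : ℝ, |t| ^ n * ‖K t‖ := by
  rw [← integral_const_mul]
  refine norm_integral_le_of_norm_le ((hK.integrable_abs_pow_mul_norm n).const_mul b)
    (.of_forall fun t ↦ ?_)
  rw [norm_mul, ← mul_assoc, mul_comm]
  exact mul_le_mul_of_nonneg_right (hg t) (norm_nonneg _)

theorem norm_integral_mul_le_of_integral_pow_mul_eq_zero (hK : HasFiniteMoments K)
    (hK₀ : ∀ n : ℕ, ∫ t : ℝ, (t : ℂ) ^ n * K t = 0) {g : ℝ → ℂ}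
    (hg : Integrable fun t ↦ K t * g t) (c : ℕ → ℂ) {N : ℕ} {b : ℝ}
    (hgc : ∀ t : ℝ, ‖g t - ∑ k ∈ Finset.range N, c k * (t : ℂ) ^ k‖ ≤ b * |t| ^ N) :
    ‖∫ t, K t * g t‖ ≤ b * ∫ t : ℝ, |t| ^ N * ‖K t‖ := by
  let p (t : ℝ) : ℂ := ∑ k ∈ Finset.range N, c k * (t : ℂ) ^ k
  have mul_p_eq (t : ℝ) : K t * p t = ∑ k ∈ Finset.range N, c k * ((t : ℂ) ^ k * K t) := by
    rw [Finset.mul_sum]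
    exact Finset.sum_congr rfl fun k _ ↦ by ring
  have integrable_mul_p : Integrable fun t ↦ K t * p t := by
    simp only [mul_p_eq]
    exact integrable_finsetSum _ fun k _ ↦ (hK k).const_mul _
  have integral_mul_p : ∫ t, K t * p t = 0 := by
    simp only [mul_p_eq]
    rw [integral_finsetSum _ fun k _ ↦ (hK k).const_mul _]
    simp only [integral_const_mul, hK₀, mul_zero, Finset.sum_const_zero]
  have integral_eq : ∫ t, K t * g t = ∫ t, K t * (g t - p t) := by
    simp only [mul_sub]
    rw [integral_sub hg integrable_mul_p, integral_mul_p, sub_zero]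
  rw [integral_eq]
  exact hK.norm_integral_mul_le hgc

end HasFiniteMoments

theorem hasFiniteMoments_schwartzMap (K : 𝓢(ℝ, ℂ)) : HasFiniteMoments K := by
  intro n
  refine (K.integrable_pow_mul volume n).mono' ?_ (.of_forall fun t ↦ by simp)
  exact Continuous.aestronglyMeasurable (by fun_prop)

theorem integral_pow_mul_fourierInv (k : 𝓢(ℝ, ℂ)) (n : ℕ) :
    ∫ t : ℝ, (t : ℂ) ^ n * (𝓕⁻ k : 𝓢(ℝ, ℂ)) t =
      (I / (2 * Real.pi)) ^ n * iteratedDeriv n k 0 := by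
  have moments := hasFiniteMoments_schwartzMap (𝓕⁻ k)
  have fourier_eq : 𝓕 ((𝓕⁻ k : 𝓢(ℝ, ℂ)) : ℝ → ℂ) = k := by
    rw [← SchwartzMap.fourier_coe, FourierTransform.fourier_fourierInv_eq]
  have deriv_eq : iteratedDeriv n k 0 =
      (-2 * Real.pi * I) ^ n * ∫ t : ℝ, (t : ℂ) ^ n * (𝓕⁻ k : 𝓢(ℝ, ℂ)) t := by
    rw [← fourier_eq, Real.iteratedDeriv_fourier (N := ⊤) (n := n)
      (fun n _ ↦ by simpa [Complex.real_smul] using moments n) le_top, Real.fourier_eq',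
      ← integral_const_mul]
    refine integral_congr_ae (.of_forall fun t ↦ ?_)
    simp only [RCLike.inner_apply, conj_trivial, smul_eq_mul]
    push_cast
    simp only [neg_mul, zero_mul, mul_zero, exp_zero, one_mul]
    ring
  have inverse_constants : I / (2 * Real.pi) * (-2 * Real.pi * I) = 1 := by
    have : (Real.pi : ℂ) ≠ 0 := by exact_mod_cast Real.pi_ne_zero
    field_simp
    simp
  rw [deriv_eq, ← mul_assoc, ← mul_pow, inverse_constants, one_pow, one_mul]

theorem iteratedDeriv_cexp_const_mul_ofReal (n : ℕ) (c : ℂ) :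
    iteratedDeriv n (fun s : ℝ ↦ cexp (c * s)) = fun s : ℝ ↦ c ^ n * cexp (c * s) := by
  induction n with
  | zero => simp
  | succ n ih =>
    ext s
    have hasDerivAt_cexp : HasDerivAt (fun s : ℝ ↦ cexp (c * s)) (cexp (c * s) * (c * 1)) s :=
      (ofRealCLM.hasDerivAt.const_mul c).cexp
    rw [iteratedDeriv_succ, ih, (hasDerivAt_cexp.const_mul (c ^ n)).deriv]
    ring

end Moments

section Cutoffs

/-- Cutoff functions: equal to `1` near the origin and supported in `[-δ, δ]`. -/
structure IsCutoff (δ : ℝ) (φ : ℝ → ℂ) : Prop where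
  isTestFunction : IsTestFunction φ
  eventuallyEq_one : φ =ᶠ[𝓝 0] 1
  eq_zero_of_lt_abs : ∀ s, δ < |s| → φ s = 0

theorem exists_isCutoff {δ : ℝ} (hδ : 0 < δ) : ∃ φ : ℝ → ℂ, IsCutoff δ φ := by
  let φ : ContDiffBump (0 : ℝ) := ⟨δ / 2, δ, by positivity, by linarith⟩
  refine ⟨fun s ↦ (φ s : ℂ), ⟨ofRealCLM.contDiff.comp φ.contDiff,
    φ.hasCompactSupport.comp_left ofReal_zero⟩, ?_, fun s hs ↦ ?_⟩
  · filter_upwards [φ.eventuallyEq_one] with s hs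
    simp [hs]
  · rw [φ.zero_of_le_dist (by simpa using hs.le), ofReal_zero]

namespace IsCutoff

variable {δ : ℝ} {φ : ℝ → ℂ}

theorem isTestFunction_deriv (hφ : IsCutoff δ φ) : IsTestFunction (deriv φ) :=
  hφ.isTestFunction.fderiv_apply 1

theorem eventually_deriv_eq_zero (hφ : IsCutoff δ φ) : ∀ᶠ s in 𝓝 0, deriv φ s = 0 := by
  filter_upwards [hφ.eventuallyEq_one.deriv] with s hs
  simpa using hs

theorem flatAlong_deriv (hφ : IsCutoff δ φ) : FlatAlong id (deriv φ) := by
  obtain ⟨C, hC⟩ := hφ.isTestFunction_deriv.exists_norm_le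
  exact flatAlong_of_eventually_eq_zero hC (by simpa using hφ.eventually_deriv_eq_zero)

end IsCutoff

theorem exists_integral_pow_mul_eq_I_pow :
    ∃ K : ℝ → ℂ, HasFiniteMoments K ∧ ∀ n : ℕ, ∫ t : ℝ, (t : ℂ) ^ n * K t = I ^ n := by
  obtain ⟨φ, hφ⟩ := exists_isCutoff one_pos
  let k : ℝ → ℂ := fun ξ ↦ φ ξ * cexp (2 * Real.pi * ξ)
  have k_contDiff : ContDiff ℝ ∞ k :=
    hφ.isTestFunction.contDiff.mul (contDiff_const.mul ofRealCLM.contDiff).cexp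
  have k_hasCompactSupport : HasCompactSupport k := hφ.isTestFunction.hasCompactSupport.mul_right
  have iteratedDeriv_k (n : ℕ) : iteratedDeriv n k 0 = (2 * Real.pi) ^ n := by
    have k_eq_cexp : k =ᶠ[𝓝 0] fun ξ : ℝ ↦ cexp (2 * Real.pi * ξ) := by
      filter_upwards [hφ.eventuallyEq_one] with ξ hξ
      simp [k, hξ]
    rw [k_eq_cexp.iteratedDeriv_eq, iteratedDeriv_cexp_const_mul_ofReal]
    simp
  let k' : 𝓢(ℝ, ℂ) := k_hasCompactSupport.toSchwartzMap k_contDiff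
  refine ⟨(𝓕⁻ k' : 𝓢(ℝ, ℂ)), hasFiniteMoments_schwartzMap _, fun n ↦ ?_⟩
  have pi_ne_zero : (Real.pi : ℂ) ≠ 0 := by exact_mod_cast Real.pi_ne_zero
  calc ∫ t : ℝ, (t : ℂ) ^ n * (𝓕⁻ k' : 𝓢(ℝ, ℂ)) t
    _ = (I / (2 * Real.pi)) ^ n * iteratedDeriv n k 0 := integral_pow_mul_fourierInv k' n
    _ = (I / (2 * Real.pi) * (2 * Real.pi)) ^ n := by rw [iteratedDeriv_k, ← mul_pow]
    _ = I ^ n := by rw [div_mul_cancel₀ _ (mul_ne_zero two_ne_zero pi_ne_zero)]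

end Cutoffs

section PencilAverage

variable {V W : Type*} [NormedAddCommGroup V] [NormedSpace ℝ V]
  [NormedAddCommGroup W] [NormedSpace ℝ W]

/-- The average, weighted by the kernel `K`, of `h` along the pencil of linear maps
`A + t • B`, `t ∈ ℝ`. -/
def pencilAverage (K : ℝ → ℂ) (A B : V →L[ℝ] W) (h : W → ℂ) (z : V) : ℂ :=
  ∫ t : ℝ, K t * h (A z + t • B z)

variable {K : ℝ → ℂ} {A B : V →L[ℝ] W} {h : W → ℂ}

theorem integrable_pencilAverage (hK : HasFiniteMoments K) (hh : IsTestFunction h) (z : V) :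
    Integrable fun t : ℝ ↦ K t * h (A z + t • B z) := by
  obtain ⟨C, hC⟩ := hh.exists_norm_le
  have continuous_comp : Continuous fun t : ℝ ↦ h (A z + t • B z) :=
    hh.continuous.comp (by fun_prop)
  exact hK.integrable.mul_bdd continuous_comp.aestronglyMeasurable (.of_forall fun t ↦ hC _)

theorem pencilAverage_kernel_add_const_mul {K' : ℝ → ℂ} (hK : HasFiniteMoments K)
    (hK' : HasFiniteMoments K') (c : ℂ) (hh : IsTestFunction h) (z : V) :
    pencilAverage (fun t ↦ K t + c * K' t) A B h z =
      pencilAverage K A B h z + c * pencilAverage K' A B h z := by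
  simp only [pencilAverage, add_mul, mul_assoc]
  rw [integral_add (integrable_pencilAverage hK hh z)
    ((integrable_pencilAverage hK' hh z).const_mul c), integral_const_mul]

theorem pencilAverage_add {h' : W → ℂ} (hK : HasFiniteMoments K) (hh : IsTestFunction h)
    (hh' : IsTestFunction h') (z : V) :
    pencilAverage K A B (fun p ↦ h p + h' p) z =
      pencilAverage K A B h z + pencilAverage K A B h' z := by
  simp only [pencilAverage, mul_add]
  exact integral_add (integrable_pencilAverage hK hh z) (integrable_pencilAverage hK hh' z)

theorem pencilAverage_const_mul (c : ℂ) (z : V) :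
    pencilAverage K A B (fun p ↦ c * h p) z = c * pencilAverage K A B h z := by
  simp only [pencilAverage, mul_left_comm _ c]
  exact integral_const_mul c _

theorem aestronglyMeasurable_smul_fderiv_comp_pencil (hK : HasFiniteMoments K)
    (hh : IsTestFunction h) (z : V) : AEStronglyMeasurable
      fun t : ℝ ↦ K t • (fderiv ℝ h (A z + t • B z)).comp (A + t • B) := by
  have continuous_fderiv : Continuous fun t : ℝ ↦
      (fderiv ℝ h (A z + t • B z)).comp (A + t • B) :=
    ((hh.contDiff.continuous_fderiv (by simp)).comp (by fun_prop)).clm_comp (by fun_prop)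
  exact hK.integrable.aestronglyMeasurable.smul continuous_fderiv.aestronglyMeasurable

theorem exists_integrable_norm_smul_fderiv_comp_pencil_le (hK : HasFiniteMoments K)
    (hh : IsTestFunction h) : ∃ g : ℝ → ℝ, Integrable g ∧
      ∀ t z, ‖K t • (fderiv ℝ h (A z + t • B z)).comp (A + t • B)‖ ≤ g t := by
  obtain ⟨C, hC⟩ := hh.exists_norm_fderiv_le
  have hC₀ : 0 ≤ C := (norm_nonneg _).trans (hC 0)
  refine ⟨_, ((hK.integrable_abs_pow_mul_norm 0).const_mul (C * ‖A‖)).add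
    ((hK.integrable_abs_pow_mul_norm 1).const_mul (C * ‖B‖)), fun t z ↦ ?_⟩
  calc ‖K t • (fderiv ℝ h (A z + t • B z)).comp (A + t • B)‖
    _ ≤ ‖K t‖ * (‖fderiv ℝ h (A z + t • B z)‖ * ‖A + t • B‖) := by
      rw [norm_smul]
      gcongr
      exact ContinuousLinearMap.opNorm_comp_le _ _
    _ ≤ ‖K t‖ * (C * (‖A‖ + |t| * ‖B‖)) := by
      gcongr
      · exact hC _
      · exact norm_add_le_of_le le_rfl (norm_smul t B).le
    _ = C * ‖A‖ * (|t| ^ 0 * ‖K t‖) + C * ‖B‖ * (|t| ^ 1 * ‖K t‖) := by ring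

theorem integrable_smul_fderiv_comp_pencil (hK : HasFiniteMoments K) (hh : IsTestFunction h)
    (z : V) : Integrable fun t : ℝ ↦ K t • (fderiv ℝ h (A z + t • B z)).comp (A + t • B) := by
  obtain ⟨g, hg, hle⟩ :=
    exists_integrable_norm_smul_fderiv_comp_pencil_le (A := A) (B := B) hK hh
  exact hg.mono' (aestronglyMeasurable_smul_fderiv_comp_pencil hK hh z)
    (.of_forall fun t ↦ hle t z)

theorem hasFDerivAt_pencilAverage (hK : HasFiniteMoments K) (hh : IsTestFunction h) (z : V) :
    HasFDerivAt (pencilAverage K A B h)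
      (∫ t : ℝ, K t • (fderiv ℝ h (A z + t • B z)).comp (A + t • B)) z := by
  obtain ⟨g, hg, hle⟩ :=
    exists_integrable_norm_smul_fderiv_comp_pencil_le (A := A) (B := B) hK hh
  refine hasFDerivAt_integral_of_dominated_of_fderiv_le univ_mem
    (.of_forall fun x ↦ (integrable_pencilAverage hK hh x).aestronglyMeasurable)
    (integrable_pencilAverage hK hh z) (aestronglyMeasurable_smul_fderiv_comp_pencil hK hh z)
    (.of_forall fun t x _ ↦ hle t x) hg (.of_forall fun t x _ ↦ ?_)
  exact ((hh.differentiable _).hasFDerivAt.comp x (A + t • B).hasFDerivAt).const_mul (K t)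

theorem fderiv_pencilAverage_apply (hK : HasFiniteMoments K) (hh : IsTestFunction h) (z v : V) :
    fderiv ℝ (pencilAverage K A B h) z v = pencilAverage K A B (fderiv ℝ h · (A v)) z +
      pencilAverage (fun t ↦ (t : ℂ) * K t) A B (fderiv ℝ h · (B v)) z := by
  rw [(hasFDerivAt_pencilAverage hK hh z).fderiv,
    ContinuousLinearMap.integral_apply (integrable_smul_fderiv_comp_pencil hK hh z),
    pencilAverage, pencilAverage,
    ← integral_add (integrable_pencilAverage hK (hh.fderiv_apply _) z)
      (integrable_pencilAverage hK.ofReal_mul (hh.fderiv_apply _) z)]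
  refine integral_congr_ae (.of_forall fun t ↦ ?_)
  simp only [ContinuousLinearMap.comp_apply, add_apply, smul_apply, map_add, map_smul,
    real_smul, smul_eq_mul]
  ring

theorem contDiff_pencilAverage [FiniteDimensional ℝ V] (hK : HasFiniteMoments K)
    (hh : IsTestFunction h) : ContDiff ℝ ∞ (pencilAverage K A B h) := by
  refine contDiff_infty.2 fun n ↦ ?_
  induction n generalizing K h with
  | zero => exact contDiff_zero.2 <| continuous_iff_continuousAt.2 fun z ↦
      (hasFDerivAt_pencilAverage hK hh z).continuousAt
  | succ n ih =>
    push_cast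
    refine contDiff_succ_iff_fderiv_apply.2
      ⟨fun z ↦ (hasFDerivAt_pencilAverage hK hh z).differentiableAt, by simp, fun v ↦ ?_⟩
    simp only [fderiv_pencilAverage_apply hK hh]
    exact (ih hK (hh.fderiv_apply _)).add (ih hK.ofReal_mul (hh.fderiv_apply _))

theorem flatAlong_pencilAverage_of_integral_pow_mul_eq_zero (hK : HasFiniteMoments K)
    (hK₀ : ∀ n : ℕ, ∫ t : ℝ, (t : ℂ) ^ n * K t = 0) (hh : IsTestFunction h) :
    FlatAlong (fun z ↦ ‖B z‖) (pencilAverage K A B h) := by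
  intro N
  obtain ⟨C, hC⟩ := hh.exists_norm_iteratedFDeriv_le N
  refine ⟨C * ∫ t : ℝ, |t| ^ N * ‖K t‖, fun z ↦ ?_⟩
  let c (k : ℕ) : ℂ := (k.factorial : ℝ)⁻¹ • iteratedFDeriv ℝ k h (A z) fun _ ↦ B z
  have taylor_eq (t : ℝ) : ∑ k ∈ Finset.range N, c k * (t : ℂ) ^ k = ∑ k ∈ Finset.range N,
      (k.factorial : ℝ)⁻¹ • iteratedFDeriv ℝ k h (A z) fun _ ↦ t • B z := by
    refine Finset.sum_congr rfl fun k _ ↦ ?_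
    rw [(iteratedFDeriv ℝ k h (A z)).map_smul_univ (fun _ ↦ t) fun _ ↦ B z, smul_comm]
    simp [c, mul_comm]
  have taylor_le (t : ℝ) : ‖h (A z + t • B z) - ∑ k ∈ Finset.range N, c k * (t : ℂ) ^ k‖
      ≤ C * ‖B z‖ ^ N * |t| ^ N := by
    rw [taylor_eq, mul_assoc, mul_comm (‖B z‖ ^ N), ← mul_pow, ← Real.norm_eq_abs, ← norm_smul]
    exact norm_sub_sum_iteratedFDeriv_le (hh.contDiff.of_le (by exact_mod_cast le_top)) hC _ _
  rw [abs_norm, mul_right_comm]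
  exact hK.norm_integral_mul_le_of_integral_pow_mul_eq_zero hK₀
    (integrable_pencilAverage hK hh z) c taylor_le

end PencilAverage

section ImaginaryShift

variable {V : Type*} [NormedAddCommGroup V] [NormedSpace ℝ V]
  {K : ℝ → ℂ} {l : V →L[ℝ] ℝ} {e : V} {δ : ℝ} {φ : ℝ → ℂ} {G : V → ℂ}

/-- The translates of `G` in the direction `e`, cut off in the translation parameter. -/
def shiftCutoff (e : V) (φ : ℝ → ℂ) (G : V → ℂ) (p : V × ℝ) : ℂ :=
  G (p.1 + p.2 • e) * φ p.2

theorem IsTestFunction.shiftCutoff (hφ : IsTestFunction φ) (hG : IsTestFunction G) (e : V) :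
    IsTestFunction (shiftCutoff e φ G) where
  contDiff := (hG.contDiff.comp (by fun_prop)).mul (hφ.contDiff.comp contDiff_snd)
  hasCompactSupport := by
    refine HasCompactSupport.intro (((hG.hasCompactSupport.isCompact.prod
      hφ.hasCompactSupport.isCompact).image
        (f := fun p : V × ℝ ↦ (p.1 - p.2 • e, p.2)) (by fun_prop))) fun p hp ↦ ?_
    contrapose! hp
    exact ⟨(p.1 + p.2 • e, p.2), ⟨subset_tsupport _ (left_ne_zero_of_mul hp),
      subset_tsupport _ (right_ne_zero_of_mul hp)⟩, by simp⟩

theorem fderiv_shiftCutoff_apply (hφ : IsTestFunction φ) (hG : IsTestFunction G) (e v : V) (s : ℝ)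
    (p : V × ℝ) :
    fderiv ℝ (shiftCutoff e φ G) p (v, s) = shiftCutoff e φ (fderiv ℝ G · v) p +
      s * (shiftCutoff e φ (fderiv ℝ G · e) p + shiftCutoff e (deriv φ) G p) := by
  have hasFDerivAt_shift : HasFDerivAt (fun p : V × ℝ ↦ p.1 + p.2 • e)
      (.fst ℝ V ℝ + (ContinuousLinearMap.snd ℝ V ℝ).smulRight e) p :=
    (ContinuousLinearMap.fst ℝ V ℝ + (ContinuousLinearMap.snd ℝ V ℝ).smulRight e).hasFDerivAt
  have hasFDerivAt_cutoff : HasFDerivAt (fun p : V × ℝ ↦ φ p.2) _ p :=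
    (hφ.differentiable p.2).hasDerivAt.hasFDerivAt.comp p hasFDerivAt_snd
  have hasFDerivAt_mul : HasFDerivAt (shiftCutoff e φ G) _ p :=
    ((hG.differentiable _).hasFDerivAt.comp p hasFDerivAt_shift).mul hasFDerivAt_cutoff
  rw [hasFDerivAt_mul.fderiv]
  simp only [shiftCutoff, Function.comp_apply, ContinuousLinearMap.comp_add, smul_add, add_apply,
    smul_apply, ContinuousLinearMap.comp_apply, ContinuousLinearMap.coe_snd',
    ContinuousLinearMap.toSpanSingleton_apply, real_smul, smul_eq_mul,
    ContinuousLinearMap.coe_fst', ContinuousLinearMap.smulRight_apply, map_smul]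
  ring

/-- A real-variable substitute for `G (z + i l(z) e)`: if the moments of `K` are `∫ tⁿ K = iⁿ`,
averaging over the real shifts `t l(z) e` against `K` acts on polynomials as the shift by
`i l(z) e`. The cutoff `φ` bounds the size of the real shifts. -/
def imaginaryShift (K : ℝ → ℂ) (l : V →L[ℝ] ℝ) (e : V) (φ : ℝ → ℂ) (G : V → ℂ) : V → ℂ :=
  pencilAverage K (.inl ℝ V ℝ) ((ContinuousLinearMap.inr ℝ V ℝ).comp l) (shiftCutoff e φ G)

theorem imaginaryShift_apply (z : V) : imaginaryShift K l e φ G z =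
    ∫ t : ℝ, K t * (G (z + (t * l z) • e) * φ (t * l z)) := by
  simp [imaginaryShift, pencilAverage, shiftCutoff]

theorem imaginaryShift_eq_of_apply_eq_zero (hK : ∫ t, K t = 1) (hφ : φ 0 = 1) {z : V}
    (hz : l z = 0) : imaginaryShift K l e φ G z = G z := by
  simp [imaginaryShift_apply, hz, hφ, integral_mul_const, hK]

theorem imaginaryShift_add_const_mul {G' : V → ℂ} (hK : HasFiniteMoments K)
    (hφ : IsTestFunction φ) (hG : IsTestFunction G) (hG' : IsTestFunction G') (c : ℂ) (z : V) :
    imaginaryShift K l e φ (fun z ↦ G z + c * G' z) z =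
      imaginaryShift K l e φ G z + c * imaginaryShift K l e φ G' z := by
  simp only [imaginaryShift]
  rw [← pencilAverage_const_mul, ← pencilAverage_add hK (hφ.shiftCutoff hG e)
    ((hφ.shiftCutoff hG' e).const_mul c)]
  congr 1
  ext p
  simp only [shiftCutoff]
  ring

theorem imaginaryShift_kernel_add_const_mul {K' : ℝ → ℂ} (hK : HasFiniteMoments K)
    (hK' : HasFiniteMoments K') (c : ℂ) (hφ : IsTestFunction φ) (hG : IsTestFunction G) (z : V) :
    imaginaryShift (fun t ↦ K t + c * K' t) l e φ G z =
      imaginaryShift K l e φ G z + c * imaginaryShift K' l e φ G z :=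
  pencilAverage_kernel_add_const_mul hK hK' c (hφ.shiftCutoff hG e) z

theorem fderiv_imaginaryShift_apply (hK : HasFiniteMoments K) (hφ : IsTestFunction φ)
    (hG : IsTestFunction G) (z v : V) :
    fderiv ℝ (imaginaryShift K l e φ G) z v = imaginaryShift K l e φ (fderiv ℝ G · v) z +
      l v * (imaginaryShift (fun t ↦ (t : ℂ) * K t) l e φ (fderiv ℝ G · e) z +
        imaginaryShift (fun t ↦ (t : ℂ) * K t) l e (deriv φ) G z) := by
  have hφ' : IsTestFunction (deriv φ) := hφ.fderiv_apply 1
  have fderiv_horizontal : (fderiv ℝ (shiftCutoff e φ G) · (v, 0)) =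
      shiftCutoff e φ (fderiv ℝ G · v) := by
    ext p
    simp [fderiv_shiftCutoff_apply hφ hG]
  have fderiv_vertical : (fderiv ℝ (shiftCutoff e φ G) · (0, l v)) =
      fun p ↦ (l v : ℂ) * (shiftCutoff e φ (fderiv ℝ G · e) p + shiftCutoff e (deriv φ) G p) := by
    ext p
    simp [fderiv_shiftCutoff_apply hφ hG, shiftCutoff]
  simp only [imaginaryShift]
  rw [fderiv_pencilAverage_apply hK (hφ.shiftCutoff hG e), ← pencilAverage_add hK.ofReal_mul
    (hφ.shiftCutoff (hG.fderiv_apply e) e) (hφ'.shiftCutoff hG e), ← pencilAverage_const_mul]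
  congr 2

theorem contDiff_imaginaryShift [FiniteDimensional ℝ V] (hK : HasFiniteMoments K)
    (hφ : IsTestFunction φ) (hG : IsTestFunction G) : ContDiff ℝ ∞ (imaginaryShift K l e φ G) :=
  contDiff_pencilAverage hK (hφ.shiftCutoff hG e)

theorem tsupport_imaginaryShift_subset (hφ : ∀ s, δ < |s| → φ s = 0) :
    tsupport (imaginaryShift K l e φ G) ⊆ Metric.cthickening (δ * ‖e‖) (tsupport G) := by
  refine closure_minimal (fun z hz ↦ ?_) Metric.isClosed_cthickening
  obtain ⟨t, ht⟩ : ∃ t : ℝ, G (z + (t * l z) • e) * φ (t * l z) ≠ 0 := by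
    by_contra! eq_zero
    exact hz (by simp [imaginaryShift_apply, eq_zero])
  have shift_le : |t * l z| ≤ δ := by
    by_contra! lt
    exact right_ne_zero_of_mul ht (hφ _ lt)
  refine Metric.mem_cthickening_of_dist_le z _ _ _ (subset_tsupport _ (left_ne_zero_of_mul ht)) ?_
  rw [dist_self_add_right, norm_smul]
  exact mul_le_mul_of_nonneg_right shift_le (norm_nonneg e)

theorem FlatAlong.imaginaryShift {ρ : V → ℝ} (hG : FlatAlong ρ G)
    (hρ : ∀ z (s : ℝ), ρ (z + s • e) = ρ z) (hK : HasFiniteMoments K) (hφ : IsTestFunction φ) :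
    FlatAlong ρ (imaginaryShift K l e φ G) := by
  intro N
  obtain ⟨C, hC⟩ := hG N
  obtain ⟨D, hD⟩ := hφ.exists_norm_le
  refine ⟨C * D * ∫ t : ℝ, |t| ^ 0 * ‖K t‖, fun z ↦ ?_⟩
  rw [imaginaryShift_apply, mul_right_comm]
  refine hK.norm_integral_mul_le fun t ↦ ?_
  have shifted_le := hρ z (t * l z) ▸ hC (z + (t * l z) • e)
  rw [norm_mul, pow_zero, mul_one, mul_right_comm]
  exact mul_le_mul shifted_le (hD _) (norm_nonneg _) ((norm_nonneg _).trans shifted_le)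

theorem flatAlong_imaginaryShift_of_flatAlong_cutoff (hK : HasFiniteMoments K)
    (hφ : FlatAlong id φ) (hG : IsTestFunction G) : FlatAlong l (imaginaryShift K l e φ G) := by
  intro N
  obtain ⟨C, hC⟩ := hφ N
  obtain ⟨D, hD⟩ := hG.exists_norm_le
  refine ⟨D * C * ∫ t : ℝ, |t| ^ N * ‖K t‖, fun z ↦ ?_⟩
  rw [imaginaryShift_apply, mul_right_comm]
  refine hK.norm_integral_mul_le fun t ↦ ?_
  calc ‖G (z + (t * l z) • e) * φ (t * l z)‖
    _ = ‖G (z + (t * l z) • e)‖ * ‖φ (t * l z)‖ := norm_mul _ _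
    _ ≤ D * (C * |t * l z| ^ N) :=
      mul_le_mul (hD _) (hC _) (norm_nonneg _) ((norm_nonneg _).trans (hD 0))
    _ = D * C * |l z| ^ N * |t| ^ N := by
      rw [abs_mul]
      ring

theorem flatAlong_imaginaryShift_of_integral_pow_mul_eq_zero (hK : HasFiniteMoments K)
    (hK₀ : ∀ n : ℕ, ∫ t : ℝ, (t : ℂ) ^ n * K t = 0) (hφ : IsTestFunction φ)
    (hG : IsTestFunction G) : FlatAlong l (imaginaryShift K l e φ G) := by
  simpa [FlatAlong, imaginaryShift] using flatAlong_pencilAverage_of_integral_pow_mul_eq_zero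
    (A := .inl ℝ V ℝ) (B := (ContinuousLinearMap.inr ℝ V ℝ).comp l) hK hK₀ (hφ.shiftCutoff hG e)

end ImaginaryShift

section DBar

variable {V : Type*} [NormedAddCommGroup V] [NormedSpace ℝ V]
  {K : ℝ → ℂ} {l : V →L[ℝ] ℝ} {e w : V} {δ : ℝ} {φ : ℝ → ℂ} {G : V → ℂ}

/-- The operator `∂_v + i ∂_w`; it is `2 ∂/∂z̄_j` for `v`, `w` the real and imaginary unit vectors
of the `j`-th coordinate, and `i ∂/∂y_j` if `v` is replaced by `0`. -/
def dbarAlong (G : V → ℂ) (v w z : V) : ℂ :=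
  fderiv ℝ G z v + I * fderiv ℝ G z w

theorem flatAlong_dbarAlong_zero_iff {ρ : V → ℝ} :
    FlatAlong ρ (dbarAlong G 0 w) ↔ FlatAlong ρ (fderiv ℝ G · w) := by
  simp [FlatAlong, dbarAlong]

theorem dbarAlong_imaginaryShift (hK : HasFiniteMoments K) (hφ : IsTestFunction φ)
    (hG : IsTestFunction G) (v w z : V) :
    dbarAlong (imaginaryShift K l e φ G) v w z = imaginaryShift K l e φ (dbarAlong G v w) z +
      (l v + I * l w) * (imaginaryShift (fun t ↦ (t : ℂ) * K t) l e φ (fderiv ℝ G · e) z +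
        imaginaryShift (fun t ↦ (t : ℂ) * K t) l e (deriv φ) G z) := by
  unfold dbarAlong
  rw [imaginaryShift_add_const_mul hK hφ (hG.fderiv_apply v) (hG.fderiv_apply w),
    fderiv_imaginaryShift_apply hK hφ hG, fderiv_imaginaryShift_apply hK hφ hG]
  ring

theorem flatAlong_dbarAlong_imaginaryShift_of_invariant {ρ : V → ℝ} {v w : V}
    (hK : HasFiniteMoments K) (hφ : IsTestFunction φ) (hG : IsTestFunction G) (hv : l v = 0)
    (hw : l w = 0) (hρ : ∀ z (s : ℝ), ρ (z + s • e) = ρ z)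
    (hGvw : FlatAlong ρ (dbarAlong G v w)) :
    FlatAlong ρ (dbarAlong (imaginaryShift K l e φ G) v w) := by
  have dbarAlong_eq : dbarAlong (imaginaryShift K l e φ G) v w =
      imaginaryShift K l e φ (dbarAlong G v w) := by
    ext z
    simp [dbarAlong_imaginaryShift hK hφ hG, hv, hw]
  exact dbarAlong_eq ▸ hGvw.imaginaryShift hρ hK hφ

theorem integral_pow_mul_add_I_mul_eq_zero (hK : HasFiniteMoments K)
    (hKI : ∀ n : ℕ, ∫ t : ℝ, (t : ℂ) ^ n * K t = I ^ n) (n : ℕ) :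
    ∫ t : ℝ, (t : ℂ) ^ n * (K t + I * ((t : ℂ) * K t)) = 0 := by
  have expand (t : ℝ) : (t : ℂ) ^ n * (K t + I * ((t : ℂ) * K t)) =
      (t : ℂ) ^ n * K t + I * ((t : ℂ) ^ (n + 1) * K t) := by ring
  simp only [expand]
  rw [integral_add (hK n) ((hK (n + 1)).const_mul I), integral_const_mul, hKI, hKI]
  linear_combination I ^ n * I_mul_I

theorem flatAlong_dbarAlong_imaginaryShift (hK : HasFiniteMoments K)
    (hKI : ∀ n : ℕ, ∫ t : ℝ, (t : ℂ) ^ n * K t = I ^ n) (hφ : IsCutoff δ φ)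
    (hG : IsTestFunction G) (he : l e = 0) (hw : l w = 1)
    (hGw : FlatAlong l (fderiv ℝ G · w)) :
    FlatAlong l (dbarAlong (imaginaryShift K l e φ G) e w) := by
  have hφ₀ := hφ.isTestFunction
  have l_shift (z : V) (s : ℝ) : l (z + s • e) = l z := by simp [he]
  have dbarAlong_eq : dbarAlong (imaginaryShift K l e φ G) e w = fun z ↦
      imaginaryShift (fun t ↦ K t + I * ((t : ℂ) * K t)) l e φ (fderiv ℝ G · e) z +
        I * imaginaryShift K l e φ (fderiv ℝ G · w) z +
          I * imaginaryShift (fun t ↦ (t : ℂ) * K t) l e (deriv φ) G z := by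
    ext z
    rw [dbarAlong_imaginaryShift hK hφ₀ hG, he, hw, ofReal_zero, ofReal_one,
      imaginaryShift_kernel_add_const_mul hK hK.ofReal_mul I hφ₀ (hG.fderiv_apply e)]
    unfold dbarAlong
    rw [imaginaryShift_add_const_mul hK hφ₀ (hG.fderiv_apply e) (hG.fderiv_apply w)]
    ring
  rw [dbarAlong_eq]
  exact ((flatAlong_imaginaryShift_of_integral_pow_mul_eq_zero (hK.add_const_mul hK.ofReal_mul I)
    (integral_pow_mul_add_I_mul_eq_zero hK hKI) hφ₀ (hG.fderiv_apply e)).add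
    ((hGw.imaginaryShift l_shift hK hφ₀).const_mul I)).add
    ((flatAlong_imaginaryShift_of_flatAlong_cutoff hK.ofReal_mul hφ.flatAlong_deriv hG).const_mul I)

theorem exists_extension_flatAlong_dbarAlong [FiniteDimensional ℝ V] (hδ : 0 < δ)
    (hG : IsTestFunction G) (he : l e = 0) (hw : l w = 1) (hGw : FlatAlong l (fderiv ℝ G · w)) :
    ∃ E : V → ℂ, IsTestFunction E ∧ (∀ z, l z = 0 → E z = G z) ∧
      tsupport E ⊆ Metric.cthickening (δ * ‖e‖) (tsupport G) ∧ FlatAlong l (dbarAlong E e w) ∧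
      ∀ (ρ : V → ℝ) (v' w' : V), (∀ z (s : ℝ), ρ (z + s • e) = ρ z) → l v' = 0 → l w' = 0 →
        FlatAlong ρ (dbarAlong G v' w') → FlatAlong ρ (dbarAlong E v' w') := by
  obtain ⟨K, hK, hKI⟩ := exists_integral_pow_mul_eq_I_pow
  obtain ⟨φ, hφ⟩ := exists_isCutoff hδ
  have hφ₀ := hφ.isTestFunction
  have tsupport_subset : tsupport (imaginaryShift K l e φ G) ⊆ _ :=
    tsupport_imaginaryShift_subset hφ.eq_zero_of_lt_abs
  have : ProperSpace V := FiniteDimensional.proper ℝ V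
  have hasCompactSupport : HasCompactSupport (imaginaryShift K l e φ G) :=
    hG.hasCompactSupport.isCompact.cthickening.of_isClosed_subset (isClosed_tsupport _)
      tsupport_subset
  exact ⟨imaginaryShift K l e φ G, ⟨contDiff_imaginaryShift hK hφ₀ hG, hasCompactSupport⟩,
    fun z hz ↦ imaginaryShift_eq_of_apply_eq_zero (by simpa using hKI 0)
      hφ.eventuallyEq_one.eq_of_nhds hz,
    tsupport_subset, flatAlong_dbarAlong_imaginaryShift hK hKI hφ hG he hw hGw,
    fun _ _ _ hρ hv' hw' ↦ flatAlong_dbarAlong_imaginaryShift_of_invariant hK hφ₀ hG hv' hw' hρ⟩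

end DBar

section VerticalCutoff

variable {m : ℕ} {f : (Fin m → ℝ) → ℂ} {φ : ℝ → ℂ} {δ : ℝ}

theorem continuous_embR : Continuous (embR (m := m)) := by
  unfold embR
  fun_prop

/-- The extension of `f` to `ℂ^m` that is constant in the imaginary directions, cut off in each of
them by `φ`. -/
def verticalCutoff (f : (Fin m → ℝ) → ℂ) (φ : ℝ → ℂ) (z : Fin m → ℂ) : ℂ :=
  f (fun k ↦ (z k).re) * ∏ k, φ (z k).im

theorem verticalCutoff_embR (hφ : φ 0 = 1) (x : Fin m → ℝ) :
    verticalCutoff f φ (embR x) = f x := by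
  simp [verticalCutoff, embR, hφ]

theorem contDiff_verticalCutoff (hf : ContDiff ℝ ∞ f) (hφ : ContDiff ℝ ∞ φ) :
    ContDiff ℝ ∞ (verticalCutoff f φ) :=
  (hf.comp (contDiff_pi.2 fun k ↦ reCLM.contDiff.comp (contDiff_apply ℝ ℂ k))).mul
    (contDiff_prod fun k _ ↦ hφ.comp (imCLM.contDiff.comp (contDiff_apply ℝ ℂ k)))

theorem tsupport_verticalCutoff_subset (hδ : 0 ≤ δ) (hφ : ∀ s, δ < |s| → φ s = 0) :
    tsupport (verticalCutoff f φ) ⊆ Metric.cthickening δ (embR '' tsupport f) := by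
  refine closure_minimal (fun z hz ↦ ?_) Metric.isClosed_cthickening
  have im_le (k : Fin m) : |(z k).im| ≤ δ := by
    by_contra! lt
    exact right_ne_zero_of_mul hz (Finset.prod_eq_zero (Finset.mem_univ k) (hφ _ lt))
  refine Metric.mem_cthickening_of_dist_le z _ _ _
    (mem_image_of_mem embR (subset_tsupport _ (left_ne_zero_of_mul hz))) ?_
  refine (dist_pi_le_iff hδ).2 fun k ↦ ?_
  rw [dist_of_re_eq (by simp [embR])]
  simpa [embR, Real.dist_eq] using im_le k

theorem verticalCutoff_add_smul_single_I (z : Fin m → ℂ) (i : Fin m) (t : ℝ) :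
    verticalCutoff f φ (z + t • (Pi.single i I : Fin m → ℂ)) = f (fun k ↦ (z k).re) *
      ((∏ k ∈ Finset.univ.erase i, φ (z k).im) * φ ((z i).im + t)) := by
  have re_eq : (fun k ↦ ((z + t • (Pi.single i I : Fin m → ℂ)) k).re) = fun k ↦ (z k).re := by
    ext k
    rcases eq_or_ne k i with rfl | hk <;> simp [*]
  rw [verticalCutoff, re_eq, ← Finset.prod_erase_mul _ _ (Finset.mem_univ i)]
  congr 2
  · refine Finset.prod_congr rfl fun k hk ↦ ?_
    simp [Finset.ne_of_mem_erase hk]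
  · simp

theorem fderiv_verticalCutoff_single_I (hf : ContDiff ℝ ∞ f) (hφ : ContDiff ℝ ∞ φ)
    (z : Fin m → ℂ) (i : Fin m) :
    fderiv ℝ (verticalCutoff f φ) z (Pi.single i I) = f (fun k ↦ (z k).re) *
      ((∏ k ∈ Finset.univ.erase i, φ (z k).im) * deriv φ (z i).im) := by
  have hasDerivAt_φ : HasDerivAt (fun t ↦ φ ((z i).im + t)) (deriv φ (z i).im) 0 := by
    have := (hφ.differentiable (by simp) ((z i).im + 0)).hasDerivAt.comp_const_add _ _
    simpa using this
  have differentiableAt : DifferentiableAt ℝ (verticalCutoff f φ) z :=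
    (contDiff_verticalCutoff hf hφ).differentiable (by simp) z
  rw [← differentiableAt.lineDeriv_eq_fderiv, lineDeriv]
  simp only [verticalCutoff_add_smul_single_I]
  exact ((hasDerivAt_φ.const_mul _).const_mul _).deriv

theorem flatAlong_fderiv_verticalCutoff_single_I (hφ : IsCutoff δ φ)
    (hfφ : IsTestFunction (verticalCutoff f φ)) (hf : ContDiff ℝ ∞ f) (i : Fin m) :
    FlatAlong (fun z : Fin m → ℂ ↦ (z i).im)
      (fderiv ℝ (verticalCutoff f φ) · (Pi.single i I)) := by
  obtain ⟨C, hC⟩ := (hfφ.fderiv_apply (Pi.single i I)).exists_norm_le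
  refine flatAlong_of_eventually_eq_zero hC ?_
  filter_upwards [hφ.eventually_deriv_eq_zero.comap _] with z hz
  rw [fderiv_verticalCutoff_single_I hf hφ.isTestFunction.contDiff, hz, mul_zero, mul_zero]

theorem exists_extension_flatAlong_fderiv_single_I (hf : IsTestFunction f) {ε : ℝ} (hε : 0 < ε) :
    ∃ G : (Fin m → ℂ) → ℂ, IsTestFunction G ∧ (∀ x, G (embR x) = f x) ∧
      tsupport G ⊆ Metric.thickening ε (embR '' tsupport f) ∧
      ∀ i, FlatAlong (fun z ↦ (z i).im) (fderiv ℝ G · (Pi.single i I)) := by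
  obtain ⟨φ, hφ⟩ := exists_isCutoff (half_pos hε)
  have tsupport_subset : tsupport (verticalCutoff f φ) ⊆
      Metric.cthickening (ε / 2) (embR '' tsupport f) :=
    tsupport_verticalCutoff_subset (half_pos hε).le hφ.eq_zero_of_lt_abs
  have hG : IsTestFunction (verticalCutoff f φ) :=
    ⟨contDiff_verticalCutoff hf.contDiff hφ.isTestFunction.contDiff,
      (hf.hasCompactSupport.isCompact.image continuous_embR).cthickening.of_isClosed_subset
        (isClosed_tsupport _) tsupport_subset⟩
  exact ⟨verticalCutoff f φ, hG, verticalCutoff_embR hφ.eventuallyEq_one.eq_of_nhds,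
    tsupport_subset.trans (Metric.cthickening_subset_thickening' hε (half_lt_self hε) _),
    flatAlong_fderiv_verticalCutoff_single_I hφ hG hf.contDiff⟩

end VerticalCutoff

theorem exists_extension_flatAlong_dbarAlong_of_mem {m : ℕ} {f : (Fin m → ℝ) → ℂ}
    (hf : IsTestFunction f) (S : Finset (Fin m)) {ε : ℝ} (hε : 0 < ε) :
    ∃ G : (Fin m → ℂ) → ℂ, IsTestFunction G ∧ (∀ x, G (embR x) = f x) ∧
      tsupport G ⊆ Metric.thickening ε (embR '' tsupport f) ∧
      ∀ i, FlatAlong (fun z ↦ (z i).im)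
        (dbarAlong G (if i ∈ S then Pi.single i 1 else 0) (Pi.single i I)) := by
  induction S using Finset.induction_on generalizing ε with
  | empty =>
    obtain ⟨G, hG, hGf, hGε, hG_flat⟩ := exists_extension_flatAlong_fderiv_single_I hf hε
    exact ⟨G, hG, hGf, hGε, fun i ↦ by simpa [flatAlong_dbarAlong_zero_iff] using hG_flat i⟩
  | insert j S hj ih =>
    obtain ⟨G, hG, hGf, hGε, hG_flat⟩ := ih (half_pos hε)
    let y : (Fin m → ℂ) →L[ℝ] ℝ := imCLM.comp (.proj j)
    have hGj : FlatAlong (fun z ↦ (z j).im) (fderiv ℝ G · (Pi.single j I)) :=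
      flatAlong_dbarAlong_zero_iff.1 (by simpa only [if_neg hj] using hG_flat j)
    obtain ⟨E, hE, hEG, hE_subset, hEj, hE_flat⟩ := exists_extension_flatAlong_dbarAlong
      (l := y) (e := Pi.single j 1) (δ := ε / 4) (by positivity) hG (by simp [y]) (by simp [y]) hGj
    refine ⟨E, hE, fun x ↦ (hEG _ (by simp [y, embR])).trans (hGf x), ?_, fun i ↦ ?_⟩
    · rw [Pi.norm_single, norm_one, mul_one] at hE_subset
      calc tsupport E
        _ ⊆ Metric.cthickening (ε / 4) (tsupport G) := hE_subset
        _ ⊆ Metric.cthickening (ε / 4) (Metric.thickening (ε / 2) (embR '' tsupport f)) :=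
          Metric.cthickening_subset_of_subset _ hGε
        _ ⊆ Metric.cthickening (ε / 4 + ε / 2) (embR '' tsupport f) :=
          Metric.cthickening_thickening_subset (by positivity) _ _
        _ ⊆ Metric.thickening ε (embR '' tsupport f) :=
          Metric.cthickening_subset_thickening' hε (by linarith) _
    · rcases eq_or_ne i j with rfl | hij
      · rw [if_pos (Finset.mem_insert_self i S)]
        exact hEj
      · have y_single (c : ℂ) : y (Pi.single i c) = 0 := by simp [y, hij.symm]
        simp only [Finset.mem_insert, hij, false_or]
        refine hE_flat _ _ _ (fun z s ↦ by simp [hij]) ?_ (y_single I) (hG_flat i)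
        split_ifs <;> simp [y_single]

/-- Existence of special almost holomorphic extensions (Lemma 2.1):
for every `f ∈ C_0^∞(ℝ^m)` and `ε > 0` there is `F ∈ C_0^∞(ℂ^m)` extending `f`,
supported in the `ε`-neighborhood of `supp f`, with
`∂F/∂z̄_j = O(|Im z_j|^N)` for every `j` and every `N`. -/
theorem special_almost_holomorphic_extension {m : ℕ} (f : (Fin m → ℝ) → ℂ)
    (hf_smooth : ContDiff ℝ (⊤ : ℕ∞) f) (hf_supp : HasCompactSupport f)
    (ε : ℝ) (hε : 0 < ε) :
    ∃ F : (Fin m → ℂ) → ℂ,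
      ContDiff ℝ (⊤ : ℕ∞) F ∧ HasCompactSupport F ∧
      (∀ x : Fin m → ℝ, F (embR x) = f x) ∧
      tsupport F ⊆ Metric.thickening ε (embR '' tsupport f) ∧
      (∀ j : Fin m, ∀ N : ℕ, ∃ C : ℝ, ∀ z : Fin m → ℂ,
        ‖dbarj F j z‖ ≤ C * |(z j).im| ^ N) := by
  obtain ⟨F, hF, hFf, hF_subset, hF_flat⟩ :=
    exists_extension_flatAlong_dbarAlong_of_mem ⟨hf_smooth, hf_supp⟩ Finset.univ hε
  refine ⟨F, hF.contDiff, hF.hasCompactSupport, hFf, hF_subset, fun j ↦ ?_⟩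
  simpa [FlatAlong, dbarAlong, dbarj, div_eq_inv_mul] using (hF_flat j).const_mul 2⁻¹
end
end

section
/- Let g ∈ C_0^∞(ℝ) and let g̃ be an almost holomorphic extension of g. Then for every compact set K ⊂ ℂ such that {Re z : z ∈ K} is disjoint from supp g, and for every N ∈ ℕ, there is a constant C with |g̃(z)| ≤ C|Im z|^N for all z ∈ K. -/
open MeasureTheory Complex

noncomputable section

/-- The Cauchy–Riemann operator `∂F/∂z̄ = (∂F/∂x + i ∂F/∂y)/2`. -/
def dbar (F : ℂ → ℂ) (z : ℂ) : ℂ :=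
  (fderiv ℝ F z 1 + Complex.I * fderiv ℝ F z Complex.I) / 2

/-- `F` is an almost holomorphic extension of `f ∈ C_0^∞(ℝ)`. -/
def IsAHExt (f : ℝ → ℂ) (F : ℂ → ℂ) : Prop :=
  ContDiff ℝ (⊤ : ℕ∞) F ∧ HasCompactSupport F ∧ (∀ x : ℝ, F x = f x) ∧
    ∀ N : ℕ, ∃ C : ℝ, ∀ z : ℂ, ‖dbar F z‖ ≤ C * |z.im| ^ N

/-!
Call a function flat if it is `O(|Im z|^n)` on `ℂ` for every `n`, and let `F` be smooth with compact
support, with `∂F/∂z̄` flat, and zero on an open subset `S` of the real axis. Since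
`∂F/∂y = i ∂F/∂x - 2i ∂F/∂z̄`, a bound `∂F/∂x = O(|Im z|^n)` over `S` integrates along vertical lines
to `F = O(|Im z|^(n+1))`. The function `∂F/∂x` satisfies the same hypotheses as `F`: it vanishes
on `S`, and `∂/∂z̄ (∂F/∂x) = ∂/∂x (∂F/∂z̄)` is flat because, by Landau's inequality
`‖f'‖² ≤ 8 sup ‖f‖ sup ‖f''‖`, horizontal derivatives of flat functions are flat. Hence induction
on `n`, with `F` varying, gives every order.
-/

open Asymptotics Filter Topology

open scoped ContDiff

section NormedSpace

variable {E F : Type*} [NormedAddCommGroup E] [NormedSpace ℝ E]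
  [NormedAddCommGroup F] [NormedSpace ℝ F] {f : E → F}

lemma contDiff_fderiv_apply_const {m n : ℕ∞ω} (hf : ContDiff ℝ n f) (hmn : m + 1 ≤ n) (v : E) :
    ContDiff ℝ m (fun x ↦ fderiv ℝ f x v) :=
  (hf.fderiv_right hmn).clm_apply contDiff_const

lemma fderiv_fderiv_apply_comm {x : E} (hf : ContDiffAt ℝ 2 f x) (v w : E) :
    fderiv ℝ (fun y ↦ fderiv ℝ f y v) x w = fderiv ℝ (fun y ↦ fderiv ℝ f y w) x v := by
  have hf' : DifferentiableAt ℝ (fderiv ℝ f) x :=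
    (hf.fderiv_right (m := 1) (by norm_num)).differentiableAt one_ne_zero
  have fderiv_apply (a b : E) :
      fderiv ℝ (fun y ↦ fderiv ℝ f y a) x b = fderiv ℝ (fderiv ℝ f) x b a := by
    simp [fderiv_clm_apply hf' (differentiableAt_const a)]
  rw [fderiv_apply, fderiv_apply]
  exact hf.isSymmSndFDerivAt (by simp) w v

lemma norm_sub_sub_fderiv_le_of_lipschitzWith_fderiv {M : NNReal} (hf : Differentiable ℝ f)
    (hM : LipschitzWith M (fderiv ℝ f)) (x w : E) :
    ‖f (x + w) - f x - fderiv ℝ f x w‖ ≤ M * ‖w‖ ^ 2 := by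
  have hbound : ∀ y ∈ Metric.closedBall x ‖w‖, ‖fderiv ℝ f y - fderiv ℝ f x‖ ≤ M * ‖w‖ := by
    intro y hy
    rw [← dist_eq_norm]
    exact (hM.dist_le_mul y x).trans (by gcongr; exact hy)
  have := (convex_closedBall x ‖w‖).norm_image_sub_le_of_norm_fderiv_le' (𝕜 := ℝ)
    (fun y _ ↦ hf y) hbound (x := x) (y := x + w) (by simp) (by simp)
  simpa [sq, mul_assoc] using this

/-- Landau's inequality: `t ‖f'‖ ≤ 2 A + M ‖v‖² t²` for all real `t`, so the discriminant of this
quadratic in `t` is nonpositive. -/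
lemma sq_norm_fderiv_apply_le_of_lipschitzWith_fderiv {M : NNReal} {A : ℝ}
    (hf : Differentiable ℝ f) (hM : LipschitzWith M (fderiv ℝ f)) {x v : E}
    (hA : ∀ t : ℝ, ‖f (x + t • v)‖ ≤ A) :
    ‖fderiv ℝ f x v‖ ^ 2 ≤ 8 * A * M * ‖v‖ ^ 2 := by
  have hquad (t : ℝ) :
      0 ≤ (M * ‖v‖ ^ 2) * (t * t) + (-‖fderiv ℝ f x v‖) * t + 2 * A := by
    have htaylor := norm_sub_sub_fderiv_le_of_lipschitzWith_fderiv hf hM x (t • v)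
    rw [map_smul, norm_smul, mul_pow, Real.norm_eq_abs, sq_abs] at htaylor
    have hx : ‖f x‖ ≤ A := by simpa using hA 0
    have : t * ‖fderiv ℝ f x v‖ ≤ 2 * A + M * (t ^ 2 * ‖v‖ ^ 2) := calc
      t * ‖fderiv ℝ f x v‖ ≤ ‖t • fderiv ℝ f x v‖ := by
        rw [norm_smul]
        gcongr
        exact Real.le_norm_self t
      _ = ‖f (x + t • v) - f x - (f (x + t • v) - f x - t • fderiv ℝ f x v)‖ := by
        rw [sub_sub_cancel]
      _ ≤ ‖f (x + t • v)‖ + ‖f x‖ + ‖f (x + t • v) - f x - t • fderiv ℝ f x v‖ :=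
        (norm_sub_le _ _).trans (by gcongr; exact norm_sub_le _ _)
      _ ≤ 2 * A + M * (t ^ 2 * ‖v‖ ^ 2) := by linarith [hA t]
    linarith
  have := discrim_le_zero hquad
  rw [discrim] at this
  linarith

end NormedSpace

section Complex

variable {E : Type*} [NormedAddCommGroup E]

/-- `f` vanishes to infinite order at the real axis, uniformly on `ℂ`. The filter `⊤` makes each
`O` a bound at every point of `ℂ` rather than an asymptotic one. -/
def IsFlat (f : ℂ → E) : Prop :=
  ∀ n : ℕ, f =O[⊤] fun z ↦ z.im ^ n

variable [NormedSpace ℝ E] {f : ℂ → E}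

lemma isFlat_fderiv_apply_one (hf : ContDiff ℝ 2 f) (hsupp : HasCompactSupport f)
    (hflat : IsFlat f) : IsFlat (fun z ↦ fderiv ℝ f z 1) := by
  intro n
  obtain ⟨M, hM⟩ := (hf.fderiv_right (m := 1) (by norm_num)).lipschitzWith_of_hasCompactSupport
    (hsupp.fderiv ℝ) one_ne_zero
  obtain ⟨C, hC⟩ := isBigO_top.1 (hflat (n * 2))
  refine .of_norm_left (.of_pow two_ne_zero (isBigO_top.2 ⟨8 * C * M, fun z ↦ ?_⟩))
  have hline (t : ℝ) : ‖f (z + t • 1)‖ ≤ C * ‖z.im ^ (n * 2)‖ := by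
    simpa using hC (z + t • 1)
  have hlandau := sq_norm_fderiv_apply_le_of_lipschitzWith_fderiv
    (hf.differentiable two_ne_zero) hM hline
  rw [norm_one, one_pow, mul_one, pow_mul] at hlandau
  simp only [Pi.pow_apply, norm_pow, norm_norm] at hlandau ⊢
  linarith

lemma fderiv_apply_one_eq_zero_of_eventually {x : ℝ} (hf : DifferentiableAt ℝ f x)
    (hzero : ∀ᶠ t : ℝ in 𝓝 x, f t = 0) : fderiv ℝ f x 1 = 0 := by
  have hderiv : HasDerivAt (fun t : ℝ ↦ f t) (fderiv ℝ f x 1) x :=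
    hf.hasFDerivAt.comp_hasDerivAt x ofRealCLM.hasDerivAt
  exact hderiv.unique ((hasDerivAt_const x 0).congr_of_eventuallyEq hzero)

lemma hasDerivAt_comp_add_ofReal_mul_I {x t : ℝ} (hf : DifferentiableAt ℝ f (x + t * I)) :
    HasDerivAt (fun s : ℝ ↦ f (x + s * I)) (fderiv ℝ f (x + t * I) I) t := by
  have hline : HasDerivAt (fun s : ℝ ↦ (x + s * I : ℂ)) I t := by
    simpa using (ofRealCLM.hasDerivAt.mul_const I).const_add (x : ℂ)
  exact hf.hasFDerivAt.comp_hasDerivAt t hline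

lemma isBigO_im_pow_succ_of_fderiv_apply_I {S : Set ℝ} {n : ℕ} (hf : Differentiable ℝ f)
    (hzero : ∀ x ∈ S, f (x : ℝ) = 0)
    (hderiv : (fun z ↦ fderiv ℝ f z I) =O[𝓟 (re ⁻¹' S)] fun z ↦ z.im ^ n) :
    f =O[𝓟 (re ⁻¹' S)] fun z ↦ z.im ^ (n + 1) := by
  obtain ⟨C, hC_pos, hC⟩ := hderiv.exists_pos
  rw [isBigOWith_principal] at hC
  refine isBigO_principal.2 ⟨C, fun z hz ↦ ?_⟩
  have hbound : ∀ t ∈ Set.uIcc 0 z.im, ‖fderiv ℝ f (z.re + t * I) I‖ ≤ C * ‖z.im ^ n‖ := by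
    intro t ht
    have ht_le : |t| ≤ |z.im| := by simpa using Set.abs_sub_left_of_mem_uIcc ht
    calc
      ‖fderiv ℝ f (z.re + t * I) I‖ ≤ C * |t| ^ n := by
        simpa using hC (z.re + t * I) (by simpa using hz)
      _ ≤ C * ‖z.im ^ n‖ := by
        rw [norm_pow, Real.norm_eq_abs]
        gcongr
  have hmean := (convex_uIcc 0 z.im).norm_image_sub_le_of_norm_hasDerivWithin_le
    (fun t _ ↦ (hasDerivAt_comp_add_ofReal_mul_I (hf _)).hasDerivWithinAt) hbound
    Set.left_mem_uIcc Set.right_mem_uIcc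
  simpa [hzero z.re hz, pow_succ, mul_assoc] using hmean

end Complex

section Dbar

variable {F : ℂ → ℂ}

lemma contDiff_dbar {m n : ℕ∞ω} (hF : ContDiff ℝ n F) (hmn : m + 1 ≤ n) :
    ContDiff ℝ m (dbar F) :=
  ((contDiff_fderiv_apply_const hF hmn 1).add
    (contDiff_const.mul (contDiff_fderiv_apply_const hF hmn I))).div_const 2

lemma hasCompactSupport_dbar (hF : HasCompactSupport F) : HasCompactSupport (dbar F) :=
  (hF.fderiv ℝ).comp_left (g := fun L : ℂ →L[ℝ] ℂ ↦ (L 1 + I * L I) / 2) (by simp)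

lemma dbar_fderiv_apply {z : ℂ} (hF : ContDiffAt ℝ 2 F z) (v : ℂ) :
    dbar (fun w ↦ fderiv ℝ F w v) z = fderiv ℝ (dbar F) z v := by
  have hdiff (u : ℂ) : DifferentiableAt ℝ (fun w ↦ fderiv ℝ F w u) z :=
    ((hF.fderiv_right (m := 1) (by norm_num)).clm_apply contDiffAt_const).differentiableAt
      one_ne_zero
  have hfderiv : HasFDerivAt (dbar F) ((2 : ℂ)⁻¹ • (fderiv ℝ (fun w ↦ fderiv ℝ F w 1) z +
      I • fderiv ℝ (fun w ↦ fderiv ℝ F w I) z)) z := by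
    refine (((hdiff 1).hasFDerivAt.add ((hdiff I).hasFDerivAt.const_smul I)).const_smul
      (2 : ℂ)⁻¹).congr_of_eventuallyEq (.of_forall fun w ↦ ?_)
    simp [dbar, div_eq_inv_mul]
  rw [hfderiv.fderiv, dbar, fderiv_fderiv_apply_comm hF v, fderiv_fderiv_apply_comm hF v]
  simp [div_eq_inv_mul, mul_add]

lemma fderiv_apply_I_eq_sub_dbar (F : ℂ → ℂ) (z : ℂ) :
    fderiv ℝ F z I = I * fderiv ℝ F z 1 - 2 * I * dbar F z := by
  rw [dbar]
  linear_combination fderiv ℝ F z I * I_mul_I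

theorem isBigO_im_pow_of_isFlat_dbar {S : Set ℝ} (hS : IsOpen S) (hF : ContDiff ℝ ∞ F)
    (hsupp : HasCompactSupport F) (hzero : ∀ x ∈ S, F (x : ℝ) = 0) (hflat : IsFlat (dbar F))
    (n : ℕ) : F =O[𝓟 (re ⁻¹' S)] fun z ↦ z.im ^ n := by
  induction n generalizing F with
  | zero =>
    obtain ⟨C, hC⟩ := hF.continuous.bounded_above_of_compact_support hsupp
    exact isBigO_principal.2 ⟨C, fun z _ ↦ by simpa using hC z⟩
  | succ n ih =>
    have hF_two : ContDiff ℝ 2 F := contDiff_infty.1 hF 2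
    have hF_diff : Differentiable ℝ F := hF_two.differentiable two_ne_zero
    have hzero_dx : ∀ x ∈ S, fderiv ℝ F (x : ℝ) 1 = 0 := fun x hx ↦
      fderiv_apply_one_eq_zero_of_eventually (hF_diff x)
        (eventually_of_mem (hS.mem_nhds hx) hzero)
    have hflat_dx : IsFlat (dbar fun z ↦ fderiv ℝ F z 1) := by
      rw [show dbar (fun z ↦ fderiv ℝ F z 1) = fun z ↦ fderiv ℝ (dbar F) z 1 from
        funext fun _ ↦ dbar_fderiv_apply hF_two.contDiffAt 1]
      exact isFlat_fderiv_apply_one (contDiff_infty.1 (contDiff_dbar hF (by simp)) 2)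
        (hasCompactSupport_dbar hsupp) hflat
    have hdx : (fun z ↦ fderiv ℝ F z 1) =O[𝓟 (re ⁻¹' S)] fun z ↦ z.im ^ n :=
      ih (contDiff_fderiv_apply_const hF (by simp) 1) (hsupp.fderiv_apply ℝ 1) hzero_dx hflat_dx
    refine isBigO_im_pow_succ_of_fderiv_apply_I hF_diff hzero ?_
    rw [funext (fderiv_apply_I_eq_sub_dbar F)]
    exact (hdx.const_mul_left I).sub (((hflat n).mono le_top).const_mul_left (2 * I))

end Dbar

theorem ahext_small_off_support_general {g : ℝ → ℂ} {G : ℂ → ℂ} (hG : IsAHExt g G) (N : ℕ) :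
    ∃ C : ℝ, ∀ z : ℂ, z.re ∉ tsupport g → ‖G z‖ ≤ C * |z.im| ^ N := by
  obtain ⟨hG_smooth, hG_supp, hG_ext, hG_dbar⟩ := hG
  have hzero : ∀ x ∈ (tsupport g)ᶜ, G (x : ℝ) = 0 := fun x hx ↦
    (hG_ext x).trans (image_eq_zero_of_notMem_tsupport hx)
  have hflat : IsFlat (dbar G) := fun n ↦ isBigO_top.2 (by simpa using hG_dbar n)
  simpa using isBigO_principal.1 (isBigO_im_pow_of_isFlat_dbar
    (isClosed_tsupport g).isOpen_compl hG_smooth hG_supp hzero hflat N)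

/-- (2.4): any almost holomorphic extension `g̃` of `g ∈ C_0^∞(ℝ)` is
`O(|Im z|^N)` for every `N`, locally uniformly where `Re z ∉ supp g`. -/
theorem ahext_small_off_support (g : ℝ → ℂ)
    (hg_smooth : ContDiff ℝ (⊤ : ℕ∞) g) (hg_supp : HasCompactSupport g)
    (G : ℂ → ℂ) (hG : IsAHExt g G)
    (K : Set ℂ) (hK : IsCompact K)
    (hdisj : ∀ z ∈ K, z.re ∉ tsupport g)
    (N : ℕ) :
    ∃ C : ℝ, ∀ z ∈ K, ‖G z‖ ≤ C * |z.im| ^ N := by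
  obtain ⟨C, hC⟩ := ahext_small_off_support_general hG N
  exact ⟨C, fun z hz ↦ hC z (hdisj z hz)⟩
end
end
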